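/- arXiv:1904.05302 — 5 statements merged into one kernel-verified Lean document; each statement's English description precedes it below -/
import Mathlib

section
/- (Aziz–Dawood inequality) Let P be a complex polynomial of degree n ≥ 1 all of whose zeros lie in |z| ≤ 1. Then max_{|z|=1}|P′(z)| ≥ (n/2)·( max_{|z|=1}|P(z)| + min_{|z|=1}|P(z)| ). -/
open Polynomial Metric

/-- The maximum of `|P(z)|` over the circle `|z| = r`. -/
noncomputable def maxMod (P : Polynomial ℂ) (r : ℝ) : ℝ :=
  ⨆ z : sphere (0 : ℂ) r, ‖P.eval (z : ℂ)‖

/-- The minimum of `|P(z)|` over the circle `|z| = r`. -/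
noncomputable def minMod (P : Polynomial ℂ) (r : ℝ) : ℝ :=
  ⨅ z : sphere (0 : ℂ) r, ‖P.eval (z : ℂ)‖

/-!
For a root `w` with `‖w‖ ≤ k ≤ ‖z‖` the real part of `z / (z - w)` is at least `‖z‖ / (‖z‖ + k)`.
Summing over the roots of `P` bounds the real part of `z * P'(z) / P(z)` from below and gives
Turán's pointwise inequality `n * (‖z‖ / (‖z‖ + k)) * ‖P(z)‖ ≤ ‖z * P'(z)‖`.

If `‖μ‖ * k ^ n` is less than the minimum of `‖P‖` on `‖w‖ = k`, then `P - μ * X ^ n` still has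
degree `n` and all its roots in the closed disc of radius `k`: this is the minimum modulus
principle for the reversed polynomial `u ^ n * P(1 / u)`, which does not vanish for `‖u‖ < 1 / k`.
By continuity Turán's inequality for `P - μ * X ^ n` persists up to the extremal `‖μ‖`; choosing the
argument of `μ` so that `n * μ * z ^ n` points in the direction of `z * P'(z)` yields the minimum
term.
-/

section NormedSpace

variable {E : Type*} [NormedAddCommGroup E]

theorem le_norm_of_forall_mem_frontier_le_norm [NormedSpace ℂ E] [Nontrivial E] {f : E → ℂ}
    {U : Set E} (hU : Bornology.IsBounded U) (hd : DiffContOnCl ℂ f U) (hf : ∀ z ∈ U, f z ≠ 0)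
    {C : ℝ} (hC : ∀ z ∈ frontier U, C ≤ ‖f z‖) {z : E} (hz : z ∈ closure U) : C ≤ ‖f z‖ := by
  rcases le_or_gt C 0 with hC0 | hC0
  · exact hC0.trans (norm_nonneg _)
  have hne : ∀ w ∈ closure U, f w ≠ 0 := fun w hw ↦ by
    rw [closure_eq_self_union_frontier] at hw
    exact hw.elim (hf w) fun hw ↦ norm_pos_iff.1 (hC0.trans_le (hC w hw))
  have hinv : ‖(f z)⁻¹‖ ≤ C⁻¹ :=
    Complex.norm_le_of_forall_mem_frontier_norm_le hU (hd.inv hne)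
      (fun w hw ↦ (norm_inv (f w)).trans_le (inv_anti₀ hC0 (hC w hw))) hz
  rwa [norm_inv, inv_le_inv₀ (norm_pos_iff.2 (hne z hz)) hC0] at hinv

theorem exists_norm_eq_norm_sub_eq [NormedSpace ℝ E] {b : E} {m : ℝ} (hm : 0 ≤ m)
    (hmb : m ≤ ‖b‖) : ∃ c : E, ‖c‖ = m ∧ ‖b - c‖ = ‖b‖ - m := by
  rcases eq_or_ne b 0 with rfl | hb
  · obtain rfl : m = 0 := le_antisymm (hmb.trans_eq norm_zero) hm
    exact ⟨0, by simp⟩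
  have hb' : 0 < ‖b‖ := norm_pos_iff.2 hb
  refine ⟨(m / ‖b‖) • b, ?_, ?_⟩
  · rw [norm_smul_of_nonneg (by positivity), div_mul_cancel₀ _ hb'.ne']
  · have hsub : b - (m / ‖b‖) • b = (1 - m / ‖b‖) • b := by module
    rw [hsub, norm_smul_of_nonneg (sub_nonneg.2 ((div_le_one hb').2 hmb)), sub_mul, one_mul,
      div_mul_cancel₀ _ hb'.ne']

theorem mul_norm_add_le_norm_of_forall_mul_norm_sub_le [NormedSpace ℝ E] {a b : E} {s m : ℝ}
    (hs : 0 < s) (hm : 0 ≤ m) (ha : m ≤ ‖a‖)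
    (h : ∀ c : E, ‖c‖ ≤ m → s * ‖a - c‖ ≤ ‖b - c‖) : s * ‖a‖ + (1 - s) * m ≤ ‖b‖ := by
  have hmb : m ≤ ‖b‖ := by
    by_contra! hlt
    have hab : s * ‖a - b‖ ≤ 0 := by simpa using h b hlt.le
    have heq : a = b := sub_eq_zero.1 (norm_le_zero_iff.1 (nonpos_of_mul_nonpos_right hab hs))
    exact hlt.not_ge (heq ▸ ha)
  obtain ⟨c, hc, hbc⟩ := exists_norm_eq_norm_sub_eq hm hmb
  have hac : s * (‖a‖ - m) ≤ ‖b‖ - m :=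
    calc s * (‖a‖ - m) ≤ s * ‖a - c‖ := by
          rw [← hc]; exact mul_le_mul_of_nonneg_left (norm_sub_norm_le a c) hs.le
      _ ≤ ‖b‖ - m := (h c hc.le).trans_eq hbc
  linarith

end NormedSpace

theorem minMod_nonneg (P : ℂ[X]) (r : ℝ) : 0 ≤ minMod P r :=
  Real.iInf_nonneg fun _ ↦ norm_nonneg _

theorem minMod_le_norm_eval (P : ℂ[X]) (z : ℂ) : minMod P ‖z‖ ≤ ‖P.eval z‖ :=
  ciInf_le (f := fun w : sphere (0 : ℂ) ‖z‖ ↦ ‖P.eval (w : ℂ)‖)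
    ⟨0, Set.forall_mem_range.2 fun _ ↦ norm_nonneg _⟩ ⟨z, by simp⟩

theorem norm_eval_le_maxMod (P : ℂ[X]) (z : ℂ) : ‖P.eval z‖ ≤ maxMod P ‖z‖ :=
  le_ciSup (f := fun w : sphere (0 : ℂ) ‖z‖ ↦ ‖P.eval (w : ℂ)‖)
    (isCompact_range (by fun_prop)).bddAbove ⟨z, by simp⟩

theorem exists_norm_eq_norm_eval_eq_maxMod (P : ℂ[X]) {r : ℝ} (hr : 0 ≤ r) :
    ∃ z : ℂ, ‖z‖ = r ∧ ‖P.eval z‖ = maxMod P r := by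
  have : Nonempty (sphere (0 : ℂ) r) := (NormedSpace.sphere_nonempty.2 hr).to_subtype
  have hcont : Continuous fun z : sphere (0 : ℂ) r ↦ ‖P.eval (z : ℂ)‖ := by fun_prop
  obtain ⟨z, -, hz⟩ := isCompact_univ.exists_sSup_image_eq Set.univ_nonempty hcont.continuousOn
  rw [Set.image_univ] at hz
  exact ⟨z, mem_sphere_zero_iff_norm.1 z.2, hz.symm⟩

theorem norm_div_norm_add_le_re_div_sub {z w : ℂ} {k : ℝ} (hw : ‖w‖ ≤ k) (hz : k ≤ ‖z‖)
    (hne : z ≠ w) : ‖z‖ / (‖z‖ + k) ≤ (z / (z - w)).re := by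
  have hz0 : 0 < ‖z‖ := by
    by_contra! hz0
    exact hne ((norm_le_zero_iff.1 hz0).trans
      (norm_le_zero_iff.1 ((hw.trans hz).trans hz0)).symm)
  have hk : 0 ≤ k := (norm_nonneg w).trans hw
  have hnormSq : Complex.normSq (z - w) = ‖z‖ ^ 2 + ‖w‖ ^ 2 - 2 * (z * star w).re := by
    rw [Complex.normSq_sub, Complex.normSq_eq_norm_sq, Complex.normSq_eq_norm_sq]; rfl
  have hre : (z / (z - w)).re = (‖z‖ ^ 2 - (z * star w).re) / Complex.normSq (z - w) := by
    rw [← Complex.normSq_eq_norm_sq, Complex.div_re, ← add_div]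
    congr 1
    simp only [Complex.normSq_apply, Complex.sub_re, Complex.sub_im, Complex.star_def,
      Complex.mul_re, Complex.conj_re, Complex.conj_im]
    ring
  have hinner : -(‖z‖ * ‖w‖) ≤ (z * star w).re := by
    have := (abs_le.1 (Complex.abs_re_le_norm (z * star w))).1
    rwa [norm_mul, norm_star] at this
  rw [hre, div_le_div_iff₀ (by positivity) (Complex.normSq_pos.2 (sub_ne_zero.2 hne)), hnormSq]
  have hfactor : 0 ≤ ‖z‖ * (k - ‖w‖) * (‖z‖ + ‖w‖) := by
    have := sub_nonneg.2 hw
    positivity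
  linear_combination hfactor + mul_le_mul_of_nonneg_left hinner (sub_nonneg.2 hz)

theorem eval_reverse_inv_mul_pow {K : Type*} [Field K] (P : K[X]) {u : K} (hu : u ≠ 0) :
    P.reverse.eval u⁻¹ * u ^ P.natDegree = P.eval u := by
  let _ := invertibleOfNonzero hu
  simpa only [invOf_eq_inv, eval₂_id] using eval₂_reverse_mul_pow (RingHom.id K) u P

section RootsInDisc

variable {P : ℂ[X]} {k : ℝ}

theorem natDegree_mul_le_re_mul_derivative_div (hroots : ∀ w, P.IsRoot w → ‖w‖ ≤ k) {z : ℂ}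
    (hz : k ≤ ‖z‖) (hPz : P.eval z ≠ 0) :
    P.natDegree * (‖z‖ / (‖z‖ + k)) ≤ (z * (P.derivative.eval z / P.eval z)).re := by
  have hsplits : P.Splits := IsAlgClosed.splits P
  have hsum : (z * (P.derivative.eval z / P.eval z)).re =
      (P.roots.map fun w ↦ (z / (z - w)).re).sum := by
    rw [hsplits.eval_derivative_div_eval_of_ne_zero hPz, ← Multiset.sum_map_mul_left,
      ← Complex.coe_reAddGroupHom, map_multiset_sum, Multiset.map_map]
    simp only [Function.comp_def, mul_one_div]
  have hterm : ∀ x ∈ P.roots.map fun w ↦ (z / (z - w)).re, ‖z‖ / (‖z‖ + k) ≤ x := by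
    simp only [Multiset.mem_map, forall_exists_index, and_imp, forall_apply_eq_imp_iff₂]
    intro w hw
    have hw := isRoot_of_mem_roots hw
    exact norm_div_norm_add_le_re_div_sub (hroots w hw) hz fun h ↦ hPz (h ▸ hw)
  rw [hsum, hsplits.natDegree_eq_card_roots, ← nsmul_eq_mul]
  simpa only [Multiset.card_map] using Multiset.card_nsmul_le_sum hterm

theorem natDegree_mul_norm_eval_le_norm_mul_derivative (hroots : ∀ w, P.IsRoot w → ‖w‖ ≤ k) {z : ℂ}
    (hz : k ≤ ‖z‖) :
    P.natDegree * (‖z‖ / (‖z‖ + k)) * ‖P.eval z‖ ≤ ‖z * P.derivative.eval z‖ := by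
  by_cases hPz : P.eval z = 0
  · rw [hPz, norm_zero, mul_zero]
    exact norm_nonneg _
  rw [← le_div_iff₀ (norm_pos_iff.2 hPz), ← norm_div, mul_div_assoc z]
  exact (natDegree_mul_le_re_mul_derivative_div hroots hz hPz).trans (Complex.re_le_norm _)

theorem eval_reverse_ne_zero (hroots : ∀ w, P.IsRoot w → ‖w‖ ≤ k) {u : ℂ} (hu : ‖u‖ < k⁻¹) :
    P.reverse.eval u ≠ 0 := by
  intro h
  rcases eq_or_ne u 0 with rfl | hu0
  · rw [← coeff_zero_eq_eval_zero, coeff_zero_reverse, leadingCoeff_eq_zero] at h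
    have hk : k < ‖((|k| + 1 : ℝ) : ℂ)‖ := by
      rw [Complex.norm_of_nonneg (by positivity)]
      exact (le_abs_self k).trans_lt (lt_add_one _)
    exact hk.not_ge (hroots _ (by simp [h]))
  · have hroot : P.IsRoot u⁻¹ := by
      rw [IsRoot.def, ← eval_reverse_inv_mul_pow P (inv_ne_zero hu0), inv_inv, h, zero_mul]
    have := hroots _ hroot
    rw [norm_inv] at this
    exact hu.not_ge (inv_le_of_inv_le₀ (norm_pos_iff.2 hu0) this)

theorem minMod_div_pow_le_norm_eval_reverse (hk : 0 < k) (hroots : ∀ w, P.IsRoot w → ‖w‖ ≤ k)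
    {u : ℂ} (hu : ‖u‖ ≤ k⁻¹) : minMod P k / k ^ P.natDegree ≤ ‖P.reverse.eval u‖ := by
  have hk' : k⁻¹ ≠ 0 := inv_ne_zero hk.ne'
  refine le_norm_of_forall_mem_frontier_le_norm (U := ball 0 k⁻¹) isBounded_ball
    P.reverse.differentiable.diffContOnCl
    (fun v hv ↦ eval_reverse_ne_zero hroots (mem_ball_zero_iff.1 hv)) (fun v hv ↦ ?_)
    (by rwa [closure_ball _ hk', mem_closedBall_zero_iff])
  rw [frontier_ball _ hk', mem_sphere_zero_iff_norm] at hv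
  have hv0 : v⁻¹ ≠ 0 := inv_ne_zero (norm_pos_iff.1 (hv ▸ inv_pos.2 hk))
  have hnorm : ‖v⁻¹‖ = k := by rw [norm_inv, hv, inv_inv]
  rw [div_le_iff₀ (by positivity)]
  calc minMod P k ≤ ‖P.eval v⁻¹‖ := hnorm ▸ minMod_le_norm_eval P v⁻¹
    _ = ‖P.reverse.eval v‖ * k ^ P.natDegree := by
      rw [← eval_reverse_inv_mul_pow P hv0, inv_inv, norm_mul, norm_pow, hnorm]

theorem minMod_div_pow_mul_norm_pow_le_norm_eval (hk : 0 < k)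
    (hroots : ∀ w, P.IsRoot w → ‖w‖ ≤ k) {z : ℂ} (hz : k ≤ ‖z‖) :
    minMod P k / k ^ P.natDegree * ‖z‖ ^ P.natDegree ≤ ‖P.eval z‖ := by
  have hz0 : z ≠ 0 := norm_pos_iff.1 (hk.trans_le hz)
  rw [← eval_reverse_inv_mul_pow P hz0, norm_mul, norm_pow]
  gcongr
  exact minMod_div_pow_le_norm_eval_reverse hk hroots (norm_inv z ▸ inv_anti₀ hk hz)

theorem natDegree_sub_C_mul_X_pow_natDegree (hk : 0 < k) (hroots : ∀ w, P.IsRoot w → ‖w‖ ≤ k)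
    {μ : ℂ} (hμ : ‖μ‖ < minMod P k / k ^ P.natDegree) :
    (P - C μ * X ^ P.natDegree).natDegree = P.natDegree := by
  refine natDegree_eq_of_le_of_coeff_ne_zero
    ((natDegree_sub_le _ _).trans (max_le le_rfl (natDegree_C_mul_X_pow_le _ _))) ?_
  rw [coeff_sub, coeff_C_mul_X_pow, if_pos rfl, coeff_natDegree, sub_ne_zero,
    ← coeff_zero_reverse, coeff_zero_eq_eval_zero]
  rintro rfl
  exact hμ.not_ge (minMod_div_pow_le_norm_eval_reverse hk hroots (by simpa using hk.le))

theorem norm_le_of_isRoot_sub_C_mul_X_pow_natDegree (hk : 0 < k)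
    (hroots : ∀ w, P.IsRoot w → ‖w‖ ≤ k) {μ : ℂ} (hμ : ‖μ‖ < minMod P k / k ^ P.natDegree)
    {w : ℂ} (hw : (P - C μ * X ^ P.natDegree).IsRoot w) : ‖w‖ ≤ k := by
  by_contra! hkw
  have hPw : P.eval w = μ * w ^ P.natDegree := by simpa [sub_eq_zero] using hw
  have := minMod_div_pow_mul_norm_pow_le_norm_eval hk hroots hkw.le
  rw [hPw, norm_mul, norm_pow] at this
  exact hμ.not_ge (le_of_mul_le_mul_right this (pow_pos (hk.trans hkw) _))

theorem natDegree_mul_norm_eval_sub_le_of_lt (hk : 0 < k) (hroots : ∀ w, P.IsRoot w → ‖w‖ ≤ k)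
    {z : ℂ} (hz : k ≤ ‖z‖) {μ : ℂ} (hμ : ‖μ‖ < minMod P k / k ^ P.natDegree) :
    P.natDegree * (‖z‖ / (‖z‖ + k)) * ‖P.eval z - μ * z ^ P.natDegree‖ ≤
      ‖z * P.derivative.eval z - P.natDegree * (μ * z ^ P.natDegree)‖ := by
  have hturan := natDegree_mul_norm_eval_le_norm_mul_derivative
    (fun _ ↦ norm_le_of_isRoot_sub_C_mul_X_pow_natDegree hk hroots hμ) hz
  have hderiv : z * (P - C μ * X ^ P.natDegree).derivative.eval z =
      z * P.derivative.eval z - P.natDegree * (μ * z ^ P.natDegree) := by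
    rcases P.natDegree.eq_zero_or_pos with hn | hn
    · simp [hn]
    · simp only [derivative_sub, derivative_C_mul, derivative_X_pow, map_natCast, eval_sub,
        eval_mul, eval_C, eval_natCast, eval_pow, eval_X, ← mul_pow_sub_one hn.ne' z]
      ring
  rw [natDegree_sub_C_mul_X_pow_natDegree hk hroots hμ, hderiv] at hturan
  simpa using hturan

theorem natDegree_mul_norm_eval_sub_le (hk : 0 < k) (hroots : ∀ w, P.IsRoot w → ‖w‖ ≤ k)
    {z : ℂ} (hz : k ≤ ‖z‖) {μ : ℂ} (hμ : ‖μ‖ ≤ minMod P k / k ^ P.natDegree) :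
    P.natDegree * (‖z‖ / (‖z‖ + k)) * ‖P.eval z - μ * z ^ P.natDegree‖ ≤
      ‖z * P.derivative.eval z - P.natDegree * (μ * z ^ P.natDegree)‖ := by
  rcases eq_or_ne μ 0 with rfl | hμ0
  · simpa using natDegree_mul_norm_eval_le_norm_mul_derivative hroots hz
  have hmem : μ ∈ closure (ball 0 (minMod P k / k ^ P.natDegree)) := by
    rw [closure_ball _ ((norm_pos_iff.2 hμ0).trans_le hμ).ne']
    exact mem_closedBall_zero_iff.2 hμ
  exact le_on_closure
    (fun ν hν ↦ natDegree_mul_norm_eval_sub_le_of_lt hk hroots hz (mem_ball_zero_iff.1 hν))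
    (by fun_prop) (by fun_prop) hmem

theorem natDegree_div_mul_norm_eval_add_minMod_le (hk : 0 < k)
    (hroots : ∀ w, P.IsRoot w → ‖w‖ ≤ k) {z : ℂ} (hz : k ≤ ‖z‖) :
    P.natDegree / (‖z‖ + k) * (‖P.eval z‖ + (‖z‖ / k) ^ (P.natDegree - 1) * minMod P k) ≤
      ‖P.derivative.eval z‖ := by
  have hz0 : 0 < ‖z‖ := hk.trans_le hz
  rcases P.natDegree.eq_zero_or_pos with hn | hn
  · simp [hn]
  have hn' : (0 : ℝ) < P.natDegree := mod_cast hn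
  have hmin := minMod_nonneg P k
  have hperturb : ∀ c : ℂ, ‖c‖ ≤ minMod P k / k ^ P.natDegree * ‖z‖ ^ P.natDegree →
      ‖z‖ / (‖z‖ + k) * ‖P.eval z - c‖ ≤ ‖z * P.derivative.eval z / P.natDegree - c‖ := by
    intro c hc
    have hturan := natDegree_mul_norm_eval_sub_le hk hroots hz (μ := c / z ^ P.natDegree)
      (by rwa [norm_div, norm_pow, div_le_iff₀ (by positivity)])
    have hnorm : ‖z * P.derivative.eval z - P.natDegree * c‖ =
        P.natDegree * ‖z * P.derivative.eval z / P.natDegree - c‖ := by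
      rw [← Complex.norm_natCast, ← norm_mul, mul_sub,
        mul_div_cancel₀ _ (Nat.cast_ne_zero.2 hn.ne')]
    rw [div_mul_cancel₀ _ (pow_ne_zero _ (norm_pos_iff.1 hz0)), hnorm, mul_assoc] at hturan
    exact le_of_mul_le_mul_left hturan hn'
  have hbound := mul_norm_add_le_norm_of_forall_mul_norm_sub_le (by positivity) (by positivity)
    (minMod_div_pow_mul_norm_pow_le_norm_eval hk hroots hz) hperturb
  rw [norm_div, norm_mul, Complex.norm_natCast, le_div_iff₀ hn'] at hbound
  refine le_of_mul_le_mul_left (hbound.trans_eq' ?_) hz0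
  rw [div_pow, ← pow_sub_one_mul hn.ne' ‖z‖, ← pow_sub_one_mul hn.ne' k]
  field_simp
  ring

end RootsInDisc

/-- For `r = 1` this is Govil's inequality. -/
theorem stmt_11_general (P : ℂ[X]) {k r : ℝ} (hk : 0 < k) (hkr : k ≤ r)
    (hroots : ∀ w, P.IsRoot w → ‖w‖ ≤ k) :
    maxMod P.derivative r ≥
      P.natDegree / (r + k) * (maxMod P r + (r / k) ^ (P.natDegree - 1) * minMod P k) := by
  obtain ⟨z, rfl, hz⟩ := exists_norm_eq_norm_eval_eq_maxMod P (hk.le.trans hkr)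
  rw [← hz]
  exact (natDegree_div_mul_norm_eval_add_minMod_le hk hroots hkr).trans (norm_eval_le_maxMod _ z)

theorem stmt_11 (n : ℕ) (hn : 1 ≤ n) (P : Polynomial ℂ) (hdeg : P.natDegree = n)
    (hroots : ∀ w : ℂ, P.IsRoot w → ‖w‖ ≤ 1) :
    maxMod (Polynomial.derivative P) 1 ≥ ((n : ℝ) / 2) * (maxMod P 1 + minMod P 1) := by
  simpa [hdeg, one_add_one_eq_two] using stmt_11_general P one_pos le_rfl hroots
end

section
/- Let P be a complex polynomial of degree n ≥ 1 all of whose zeros lie in |z| ≤ 1, and define the conjugate-reciprocal polynomial Q(z) = z^n · conj(P(1/conj(z))) (equivalently, Q is the polynomial whose j-th coefficient is the complex conjugate of the (n−j)-th coefficient of P). Then |Q′(z)| ≤ |P′(z)| for every z with |z| = 1. -/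
open Polynomial Metric

/-!
On the unit circle `z * Q'(z)` and `n * P(z) - z * P'(z)` have the same modulus. So if `P(z) ≠ 0`
and `s = z * P'(z) / P(z)`, the claim is `‖n - s‖ ≤ ‖s‖`, that is, `n / 2 ≤ Re s`. Now `s` is the
sum of `z / (z - w)` over the `n` roots `w` of `P`, and each term has real part at least `1 / 2`,
because `‖1 - z / (z - w)‖ = ‖w‖ / ‖z - w‖ ≤ ‖z / (z - w)‖`.
-/

section Reflect

theorem sum_range_C_coeff_sub_mul_X_pow_eq_reflect {R : Type*} [Semiring R] {p : R[X]} {N : ℕ}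
    (hp : p.natDegree ≤ N) :
    ∑ j ∈ Finset.range (N + 1), C (p.coeff (N - j)) * X ^ j = reflect N p := by
  have hdeg : (reflect N p).natDegree < N + 1 :=
    Nat.lt_succ_of_le (natDegree_reflect_le.trans (max_le le_rfl hp))
  rw [as_sum_range_C_mul_X_pow' (reflect N p) hdeg]
  refine Finset.sum_congr rfl fun j hj => ?_
  rw [coeff_reflect, revAt_le (Finset.mem_range_succ_iff.mp hj)]

theorem coeff_X_mul_derivative {R : Type*} [Semiring R] (p : R[X]) (k : ℕ) :
    (X * derivative p).coeff k = p.coeff k * k := by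
  cases k <;> simp [coeff_X_mul, coeff_derivative]

theorem natDegree_X_mul_derivative_le {R : Type*} [Semiring R] (p : R[X]) :
    (X * derivative p).natDegree ≤ p.natDegree := by
  rw [natDegree_le_iff_coeff_eq_zero]
  intro k hk
  rw [coeff_X_mul_derivative, coeff_eq_zero_of_natDegree_lt hk, zero_mul]

theorem X_mul_derivative_reflect {R : Type*} [CommRing R] {p : R[X]} {N : ℕ}
    (hp : p.natDegree ≤ N) :
    X * derivative (reflect N p) = reflect N (C (N : R) * p - X * derivative p) := by
  ext j
  simp only [coeff_reflect, coeff_sub, coeff_C_mul, coeff_X_mul_derivative]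
  rcases le_or_gt j N with hj | hj
  · rw [revAt_le hj, Nat.cast_sub hj]
    ring
  · simp [revAt_eq_self_of_lt hj, coeff_eq_zero_of_natDegree_lt (hp.trans_lt hj)]

variable {𝕜 : Type*} [RCLike 𝕜] {p : 𝕜[X]} {N : ℕ} {z : 𝕜}

theorem norm_eval_reflect_map_conj (hp : p.natDegree ≤ N) (hz : ‖z‖ = 1) :
    ‖(reflect N (p.map (starRingEnd 𝕜))).eval z‖ = ‖p.eval z‖ := by
  have hz0 : z ≠ 0 := norm_ne_zero_iff.mp (hz ▸ one_ne_zero)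
  let _ : Invertible (starRingEnd 𝕜 z) := invertibleOfNonzero ((_root_.map_ne_zero _).mpr hz0)
  have heval : (reflect N (p.map (starRingEnd 𝕜))).eval z * starRingEnd 𝕜 z ^ N =
      (p.map (starRingEnd 𝕜)).eval (starRingEnd 𝕜 z) := by
    simpa only [eval₂_id, invOf_eq_inv, ← RCLike.inv_eq_conj hz, inv_inv] using
      eval₂_reflect_mul_pow (RingHom.id 𝕜) (starRingEnd 𝕜 z) N
        (p.map (starRingEnd 𝕜)) (natDegree_map_le.trans hp)
  simpa [eval_map_apply, hz] using congrArg norm heval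

theorem norm_eval_derivative_reflect_map_conj (hp : p.natDegree ≤ N) (hz : ‖z‖ = 1) :
    ‖(derivative (reflect N (p.map (starRingEnd 𝕜)))).eval z‖ =
      ‖N * p.eval z - z * (derivative p).eval z‖ := by
  have hdeg : (C (N : 𝕜) * p - X * derivative p).natDegree ≤ N :=
    (natDegree_sub_le_of_le ((natDegree_C_mul_le _ _).trans hp)
      ((natDegree_X_mul_derivative_le p).trans hp)).trans_eq (max_self N)
  calc ‖(derivative (reflect N (p.map (starRingEnd 𝕜)))).eval z‖
      = ‖(X * derivative (reflect N (p.map (starRingEnd 𝕜)))).eval z‖ := by simp [hz]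
    _ = ‖(reflect N ((C (N : 𝕜) * p - X * derivative p).map (starRingEnd 𝕜))).eval z‖ := by
        rw [X_mul_derivative_reflect (natDegree_map_le.trans hp)]
        simp [derivative_map]
    _ = ‖N * p.eval z - z * (derivative p).eval z‖ := by
        rw [norm_eval_reflect_map_conj hdeg hz]
        simp

end Reflect

section LogDerivative

theorem norm_ofReal_sub_le_norm_iff {a : ℝ} (ha : 0 < a) {s : ℂ} :
    ‖(a : ℂ) - s‖ ≤ ‖s‖ ↔ a / 2 ≤ s.re := by
  rw [← sq_le_sq₀ (norm_nonneg _) (norm_nonneg _), Complex.sq_norm, Complex.sq_norm,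
    Complex.normSq_apply, Complex.normSq_apply, Complex.sub_re, Complex.sub_im,
    Complex.ofReal_re, Complex.ofReal_im]
  constructor <;> intro h <;> nlinarith

theorem half_le_re_div_sub_iff {z w : ℂ} (hne : z ≠ w) :
    1 / 2 ≤ (z / (z - w)).re ↔ ‖w‖ ≤ ‖z‖ := by
  have hsub : z - w ≠ 0 := sub_ne_zero.mpr hne
  have hone_sub : ((1 : ℝ) : ℂ) - z / (z - w) = -w / (z - w) := by
    rw [Complex.ofReal_one]
    field_simp
    ring
  rw [← norm_ofReal_sub_le_norm_iff one_pos, hone_sub, norm_div, norm_div, norm_neg,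
    div_le_div_iff_of_pos_right (norm_pos_iff.mpr hsub)]

variable {P : ℂ[X]} {z : ℂ}

theorem natDegree_div_two_le_re_mul_eval_derivative_div_eval (hPz : P.eval z ≠ 0)
    (hroots : ∀ w, P.IsRoot w → ‖w‖ ≤ ‖z‖) :
    (P.natDegree : ℝ) / 2 ≤ (z * (derivative P).eval z / P.eval z).re := by
  have hsplits : P.Splits := IsAlgClosed.splits P
  have hsum : (z * (derivative P).eval z / P.eval z).re =
      (P.roots.map fun w => (z / (z - w)).re).sum := by
    rw [mul_div_assoc, hsplits.eval_derivative_div_eval_of_ne_zero hPz,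
      ← Multiset.sum_map_mul_left]
    simpa [div_eq_mul_inv, Function.comp_def] using
      map_multiset_sum Complex.reAddGroupHom (P.roots.map fun w => z / (z - w))
  have hterm : ∀ x ∈ P.roots.map fun w => (z / (z - w)).re, 1 / 2 ≤ x := by
    simp only [Multiset.forall_mem_map_iff]
    intro w hw
    have hw_root : P.IsRoot w := isRoot_of_mem_roots hw
    have hzw : z ≠ w := by
      rintro rfl
      exact hPz hw_root
    exact (half_le_re_div_sub_iff hzw).mpr (hroots w hw_root)
  have hcard := Multiset.card_nsmul_le_sum hterm
  rw [Multiset.card_map, splits_iff_card_roots.mp hsplits, nsmul_eq_mul, mul_one_div] at hcard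
  exact hcard.trans_eq hsum.symm

theorem norm_natDegree_mul_eval_sub_le (hroots : ∀ w, P.IsRoot w → ‖w‖ ≤ ‖z‖) :
    ‖P.natDegree * P.eval z - z * (derivative P).eval z‖ ≤ ‖z * (derivative P).eval z‖ := by
  rcases Nat.eq_zero_or_pos P.natDegree with hdeg | hdeg
  · simp [hdeg]
  by_cases hPz : P.eval z = 0
  · simp [hPz]
  set s := z * (derivative P).eval z / P.eval z
  have hmul : z * (derivative P).eval z = s * P.eval z := (div_mul_cancel₀ _ hPz).symm
  have hle : ‖(P.natDegree : ℂ) - s‖ ≤ ‖s‖ := by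
    exact_mod_cast (norm_ofReal_sub_le_norm_iff (Nat.cast_pos.mpr hdeg)).mpr
      (natDegree_div_two_le_re_mul_eval_derivative_div_eval hPz hroots)
  rw [hmul, ← sub_mul, norm_mul, norm_mul]
  exact mul_le_mul_of_nonneg_right hle (norm_nonneg _)

end LogDerivative

theorem stmt_14 (n : ℕ) (hn : 1 ≤ n) (P : Polynomial ℂ) (hdeg : P.natDegree = n)
    (hroots : ∀ w : ℂ, P.IsRoot w → ‖w‖ ≤ 1)
    (Q : Polynomial ℂ)
    (hQ : Q = ∑ j ∈ Finset.range (n + 1),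
        C ((starRingEnd ℂ) (P.coeff (n - j))) * X ^ j) :
    ∀ z : ℂ, ‖z‖ = 1 →
      ‖(Polynomial.derivative Q).eval z‖ ≤
        ‖(Polynomial.derivative P).eval z‖ := by
  intro z hz
  subst hdeg
  have hQ_reflect : Q = reflect P.natDegree (P.map (starRingEnd ℂ)) := by
    rw [hQ, ← sum_range_C_coeff_sub_mul_X_pow_eq_reflect natDegree_map_le]
    simp only [coeff_map]
  calc ‖(derivative Q).eval z‖
      = ‖P.natDegree * P.eval z - z * (derivative P).eval z‖ := by
        rw [hQ_reflect, norm_eval_derivative_reflect_map_conj le_rfl hz]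
    _ ≤ ‖z * (derivative P).eval z‖ :=
        norm_natDegree_mul_eval_sub_le fun w hw => (hroots w hw).trans_eq hz.symm
    _ = ‖(derivative P).eval z‖ := by rw [norm_mul, hz, one_mul]
end

section
/- (Osserman's boundary Schwarz lemma) Let f be a function analytic on an open set containing the closed unit disc {z : |z| ≤ 1}, such that |f(z)| < 1 for all |z| < 1 and f(0) = 0. If b is a point with |b| = 1 and |f(b)| = 1, then |f′(b)| ≥ 2/(1 + |f′(0)|). -/
open Metric

/-!
Since `f 0 = 0`, the quotient `g z = f z / z` maps the unit disc into the closed unit disc, with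
`g 0 = f′ 0`. The Schwarz–Pick inequality at the origin says that `g z` stays within
pseudohyperbolic distance `‖z‖` of `g 0`, which yields `‖f z‖ ≤ φ ‖z‖` for
`φ t = t * ((‖f′ 0‖ + t) / (1 + ‖f′ 0‖ * t))`. Along the radius ending at `b` this bound becomes an
equality at `t = 1`, so the left derivatives there satisfy `φ′ 1 ≤ ‖f′ b‖`, and
`φ′ 1 = 2 / (1 + ‖f′ 0‖)`. Vector-valued `f` reduces to this case by composing with a norming
functional of `f b`.
-/

open Set Filter Topology ComplexConjugate

/-- The Blaschke factor `z ↦ (z - a) / (1 - conj a * z)`, which for `‖a‖ < 1` is an automorphism of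
the unit disc moving `a` to the origin. For `a` and `z` in the disc its norm is their
pseudohyperbolic distance. -/
noncomputable def blaschkeFactor (a z : ℂ) : ℂ :=
  (z - a) / (1 - conj a * z)

section BlaschkeFactor

variable {a z : ℂ}

lemma blaschkeFactor_self (a : ℂ) : blaschkeFactor a a = 0 := by
  simp [blaschkeFactor]

lemma norm_one_sub_conj_mul_sq (a z : ℂ) :
    ‖1 - conj a * z‖ ^ 2 = ‖z - a‖ ^ 2 + (1 - ‖a‖ ^ 2) * (1 - ‖z‖ ^ 2) := by
  simp only [Complex.sq_norm, Complex.normSq_apply, Complex.sub_re, Complex.sub_im,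
    Complex.mul_re, Complex.mul_im, Complex.conj_re, Complex.conj_im, Complex.one_re,
    Complex.one_im]
  ring

lemma one_sub_norm_sq_mul_one_sub_norm_sq_nonneg (ha : ‖a‖ ≤ 1) (hz : ‖z‖ ≤ 1) :
    0 ≤ (1 - ‖a‖ ^ 2) * (1 - ‖z‖ ^ 2) :=
  mul_nonneg (sub_nonneg.mpr (pow_le_one₀ (norm_nonneg a) ha))
    (sub_nonneg.mpr (pow_le_one₀ (norm_nonneg z) hz))

lemma one_sub_norm_mul_norm_pos (ha : ‖a‖ < 1) (hz : ‖z‖ ≤ 1) : 0 < 1 - ‖a‖ * ‖z‖ :=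
  sub_pos.mpr (mul_lt_one_of_nonneg_of_lt_one_left (norm_nonneg a) ha hz)

lemma norm_one_sub_conj_mul_pos (ha : ‖a‖ < 1) (hz : ‖z‖ ≤ 1) : 0 < ‖1 - conj a * z‖ :=
  (one_sub_norm_mul_norm_pos ha hz).trans_le (by simpa using norm_sub_norm_le 1 (conj a * z))

lemma norm_blaschkeFactor_le_one (ha : ‖a‖ ≤ 1) (hz : ‖z‖ ≤ 1) : ‖blaschkeFactor a z‖ ≤ 1 := by
  have hsq : ‖z - a‖ ^ 2 ≤ ‖1 - conj a * z‖ ^ 2 := by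
    rw [norm_one_sub_conj_mul_sq]
    exact le_add_of_nonneg_right (one_sub_norm_sq_mul_one_sub_norm_sq_nonneg ha hz)
  rw [blaschkeFactor, norm_div]
  exact div_le_one_of_le₀ (le_of_sq_le_sq hsq (norm_nonneg _)) (norm_nonneg _)

lemma differentiableAt_blaschkeFactor (ha : ‖a‖ < 1) (hz : ‖z‖ ≤ 1) :
    DifferentiableAt ℂ (blaschkeFactor a) z := by
  have hne : 1 - conj a * z ≠ 0 := norm_pos_iff.mp (norm_one_sub_conj_mul_pos ha hz)
  unfold blaschkeFactor
  fun_prop (disch := exact hne)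

lemma norm_sub_norm_div_le_norm_blaschkeFactor (ha : ‖a‖ < 1) (hz : ‖z‖ ≤ 1) :
    (‖z‖ - ‖a‖) / (1 - ‖a‖ * ‖z‖) ≤ ‖blaschkeFactor a z‖ := by
  have hden : 0 < 1 - ‖a‖ * ‖z‖ := one_sub_norm_mul_norm_pos ha hz
  have hsub : (‖z‖ - ‖a‖) ^ 2 ≤ ‖z - a‖ ^ 2 :=
    sq_le_sq.mpr (by simpa using abs_norm_sub_norm_le z a)
  set p := (1 - ‖a‖ ^ 2) * (1 - ‖z‖ ^ 2) with hp
  have hp_nonneg : 0 ≤ p := one_sub_norm_sq_mul_one_sub_norm_sq_nonneg ha.le hz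
  rw [blaschkeFactor, norm_div, div_le_div_iff₀ hden (norm_one_sub_conj_mul_pos ha hz)]
  refine le_of_sq_le_sq ?_ (by positivity)
  calc ((‖z‖ - ‖a‖) * ‖1 - conj a * z‖) ^ 2
      = (‖z‖ - ‖a‖) ^ 2 * ‖z - a‖ ^ 2 + (‖z‖ - ‖a‖) ^ 2 * p := by
        rw [mul_pow, norm_one_sub_conj_mul_sq, mul_add]
    _ ≤ (‖z‖ - ‖a‖) ^ 2 * ‖z - a‖ ^ 2 + ‖z - a‖ ^ 2 * p := by gcongr
    _ = (‖z - a‖ * (1 - ‖a‖ * ‖z‖)) ^ 2 := by rw [hp]; ring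

end BlaschkeFactor

section SchwarzPick

variable {E : Type*} [NormedAddCommGroup E] [NormedSpace ℂ E]

theorem norm_blaschkeFactor_le_norm_of_mapsTo_ball {g : E → ℂ} {z : E}
    (hg : DifferentiableOn ℂ g (ball 0 1)) (hmaps : MapsTo g (ball 0 1) (closedBall 0 1))
    (hg0 : ‖g 0‖ < 1) (hz : ‖z‖ < 1) : ‖blaschkeFactor (g 0) (g z)‖ ≤ ‖z‖ := by
  have hnorm : ∀ w ∈ ball (0 : E) 1, ‖g w‖ ≤ 1 := fun w hw ↦ by simpa using hmaps hw
  refine Complex.norm_le_norm_of_mapsTo_ball (f := fun w ↦ blaschkeFactor (g 0) (g w)) (R := 1)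
    (fun w hw ↦ ?_) (fun w hw ↦ ?_) (blaschkeFactor_self _) hz
  · exact (differentiableAt_blaschkeFactor hg0 (hnorm w hw)).comp_differentiableWithinAt w (hg w hw)
  · simpa using norm_blaschkeFactor_le_one hg0.le (hnorm w hw)

theorem norm_le_norm_add_norm_div_of_mapsTo_ball {g : E → ℂ} {z : E}
    (hg : DifferentiableOn ℂ g (ball 0 1)) (hmaps : MapsTo g (ball 0 1) (closedBall 0 1))
    (hz : ‖z‖ < 1) : ‖g z‖ ≤ (‖g 0‖ + ‖z‖) / (1 + ‖g 0‖ * ‖z‖) := by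
  have hgz : ‖g z‖ ≤ 1 := by simpa using hmaps (by simpa using hz)
  have hg0 : ‖g 0‖ ≤ 1 := by simpa using hmaps (mem_ball_self one_pos)
  rcases hg0.eq_or_lt with heq | hlt
  · rwa [heq, one_mul, div_self (by positivity)]
  · have hpick : (‖g z‖ - ‖g 0‖) / (1 - ‖g 0‖ * ‖g z‖) ≤ ‖z‖ :=
      (norm_sub_norm_div_le_norm_blaschkeFactor hlt hgz).trans
        (norm_blaschkeFactor_le_norm_of_mapsTo_ball hg hmaps hlt hz)
    rw [div_le_iff₀ (one_sub_norm_mul_norm_pos hlt hgz)] at hpick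
    rw [le_div_iff₀ (by positivity)]
    linarith

theorem norm_le_norm_mul_norm_deriv_add_norm_div_of_mapsTo_ball {f : ℂ → ℂ} {z : ℂ}
    (hf : DifferentiableOn ℂ f (ball 0 1)) (hmaps : MapsTo f (ball 0 1) (closedBall 0 1))
    (hf0 : f 0 = 0) (hz : ‖z‖ < 1) :
    ‖f z‖ ≤ ‖z‖ * ((‖deriv f 0‖ + ‖z‖) / (1 + ‖deriv f 0‖ * ‖z‖)) := by
  have hfactor : f z = z * dslope f 0 z := by simpa [hf0] using (sub_smul_dslope f 0 z).symm
  have hdiff : DifferentiableOn ℂ (dslope f 0) (ball 0 1) :=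
    (Complex.differentiableOn_dslope (ball_mem_nhds _ one_pos)).mpr hf
  have hmaps_dslope : MapsTo (dslope f 0) (ball 0 1) (closedBall 0 1) := fun w hw ↦ by
    simpa using Complex.norm_dslope_le_div_of_mapsTo_ball hf (by rwa [hf0]) hw
  rw [hfactor, norm_mul]
  gcongr
  simpa using norm_le_norm_add_norm_div_of_mapsTo_ball hdiff hmaps_dslope hz

end SchwarzPick

section LeftDerivative

theorem le_norm_of_hasDerivWithinAt_Iio_of_norm_le {E : Type*} [NormedAddCommGroup E]
    [NormedSpace ℝ E] {u : ℝ → E} {u' : E} {φ : ℝ → ℝ} {φ' x : ℝ}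
    (hu : HasDerivWithinAt u u' (Iio x) x) (hφ : HasDerivWithinAt φ φ' (Iio x) x)
    (hle : ∀ᶠ t in 𝓝[<] x, ‖u t‖ ≤ φ t) (hx : φ x ≤ ‖u x‖) : φ' ≤ ‖u'‖ := by
  rw [hasDerivWithinAt_iff_tendsto_slope' self_notMem_Iio] at hu hφ
  refine le_of_tendsto_of_tendsto hφ hu.norm ?_
  filter_upwards [hle, self_mem_nhdsWithin] with t hut htx
  have hpos : 0 < x - t := sub_pos.mpr htx
  calc slope φ x t = (φ x - φ t) / (x - t) := by rw [slope_comm, slope_def_field]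
    _ ≤ ‖u x - u t‖ / (x - t) := by
        gcongr
        linarith [norm_sub_norm_le (u x) (u t)]
    _ = ‖slope u x t‖ := by
        rw [slope_comm, slope_def_module, norm_smul, norm_inv, Real.norm_of_nonneg hpos.le,
          div_eq_inv_mul]

lemma hasDerivAt_mul_add_div_one_add_mul {a : ℝ} (ha : 1 + a ≠ 0) :
    HasDerivAt (fun t : ℝ ↦ t * ((a + t) / (1 + a * t))) (2 / (1 + a)) 1 := by
  have hden : HasDerivAt (fun t : ℝ ↦ 1 + a * t) a 1 := by
    simpa using ((hasDerivAt_id (1 : ℝ)).const_mul a).const_add 1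
  have hquot : HasDerivAt (fun t : ℝ ↦ (a + t) / (1 + a * t)) ((1 - a) / (1 + a)) 1 := by
    refine (((hasDerivAt_id' (1 : ℝ)).const_add a).fun_div hden (by simpa using ha)).congr_deriv ?_
    field_simp
    ring
  refine ((hasDerivAt_id' (1 : ℝ)).fun_mul hquot).congr_deriv ?_
  field_simp
  ring

lemma hasDerivWithinAt_Iio_comp_ofReal_mul {E : Type*} [NormedAddCommGroup E] [NormedSpace ℂ E]
    {f : ℂ → E} {f' : E} {b : ℂ} (hb : b ≠ 0) (hf : HasDerivWithinAt f f' (ball 0 ‖b‖) b) :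
    HasDerivWithinAt (fun t : ℝ ↦ f (t * b)) (b • f') (Iio 1) 1 := by
  have hray : HasDerivWithinAt (fun t : ℝ ↦ (t : ℂ) * b) b (Ioo 0 1) 1 := by
    simpa using ((Complex.ofRealCLM.hasDerivAt (x := 1)).mul_const b).hasDerivWithinAt
  have hmaps : MapsTo (fun t : ℝ ↦ (t : ℂ) * b) (Ioo 0 1) (ball 0 ‖b‖) := fun t ht ↦ by
    simpa [abs_of_pos ht.1, hb] using ht.2
  exact (hf.scomp_of_eq 1 hray hmaps (by simp)).mono_of_mem_nhdsWithin (Ioo_mem_nhdsLT one_pos)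

end LeftDerivative

theorem two_div_one_add_norm_deriv_le_norm_of_hasDerivWithinAt {f : ℂ → ℂ} {f' b : ℂ}
    (hf : DifferentiableOn ℂ f (ball 0 1)) (hmaps : MapsTo f (ball 0 1) (closedBall 0 1))
    (hf0 : f 0 = 0) (hb : ‖b‖ = 1) (hfb : ‖f b‖ = 1) (hf' : HasDerivWithinAt f f' (ball 0 1) b) :
    2 / (1 + ‖deriv f 0‖) ≤ ‖f'‖ := by
  have hradial : HasDerivWithinAt (fun t : ℝ ↦ f (t * b)) (b • f') (Iio 1) 1 :=
    hasDerivWithinAt_Iio_comp_ofReal_mul (norm_ne_zero_iff.mp (by simp [hb])) (by rwa [hb])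
  have hden : 1 + ‖deriv f 0‖ ≠ 0 := by positivity
  have hgrowth : ∀ᶠ t : ℝ in 𝓝[<] 1,
      ‖f (t * b)‖ ≤ t * ((‖deriv f 0‖ + t) / (1 + ‖deriv f 0‖ * t)) := by
    filter_upwards [Ioo_mem_nhdsLT one_pos] with t ht
    have hnorm : ‖(t : ℂ) * b‖ = t := by simp [hb, abs_of_pos ht.1]
    simpa only [hnorm] using norm_le_norm_mul_norm_deriv_add_norm_div_of_mapsTo_ball hf hmaps hf0
      (hnorm.trans_lt ht.2)
  simpa [norm_smul, hb] using le_norm_of_hasDerivWithinAt_Iio_of_norm_le hradial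
    (hasDerivAt_mul_add_div_one_add_mul hden).hasDerivWithinAt hgrowth
    (by simp [hfb, div_self_le_one, add_comm])

theorem stmt_17_general {E : Type*} [NormedAddCommGroup E] [NormedSpace ℂ E]
    {f : ℂ → E} {f' : E} {b : ℂ} (hf : DifferentiableOn ℂ f (ball 0 1))
    (hmaps : MapsTo f (ball 0 1) (closedBall 0 1)) (hf0 : f 0 = 0) (hb : ‖b‖ = 1)
    (hfb : ‖f b‖ = 1) (hf' : HasDerivWithinAt f f' (ball 0 1) b) :
    2 / (1 + ‖deriv f 0‖) ≤ ‖f'‖ := by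
  obtain ⟨ℓ, hℓ, hℓb⟩ := exists_dual_vector'' ℂ (f b)
  have hℓ_le (v : E) : ‖ℓ v‖ ≤ ‖v‖ := by simpa using ℓ.le_of_opNorm_le hℓ v
  have hderiv_zero : deriv (ℓ ∘ f) 0 = ℓ (deriv f 0) :=
    (ℓ.hasFDerivAt.comp_hasDerivAt 0
      (hf.differentiableAt (ball_mem_nhds _ one_pos)).hasDerivAt).deriv
  have hmaps_ℓ : MapsTo (ℓ ∘ f) (ball 0 1) (closedBall 0 1) := fun z hz ↦ by
    simpa using (hℓ_le (f z)).trans (by simpa using hmaps hz)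
  calc 2 / (1 + ‖deriv f 0‖) ≤ 2 / (1 + ‖deriv (ℓ ∘ f) 0‖) := by
        rw [hderiv_zero]
        gcongr
        exact hℓ_le _
    _ ≤ ‖ℓ f'‖ := two_div_one_add_norm_deriv_le_norm_of_hasDerivWithinAt
        (ℓ.differentiable.comp_differentiableOn hf) hmaps_ℓ (by simp [hf0]) hb
        (by simp [hℓb, hfb]) (ℓ.hasFDerivAt.comp_hasDerivWithinAt b hf')
    _ ≤ ‖f'‖ := hℓ_le f'

theorem stmt_17 (f : ℂ → ℂ) (U : Set ℂ) (hU : IsOpen U)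
    (hball : closedBall (0 : ℂ) 1 ⊆ U) (hf : DifferentiableOn ℂ f U)
    (hbound : ∀ z : ℂ, ‖z‖ < 1 → ‖f z‖ < 1)
    (hf0 : f 0 = 0)
    (b : ℂ) (hb : ‖b‖ = 1) (hfb : ‖f b‖ = 1) :
    ‖deriv f b‖ ≥ 2 / (1 + ‖deriv f 0‖) := by
  have hderiv : HasDerivAt f (deriv f b) b :=
    (hf.differentiableAt (hU.mem_nhds (hball (by simp [hb])))).hasDerivAt
  exact stmt_17_general (hf.mono (ball_subset_closedBall.trans hball))
    (fun z hz ↦ by simpa using (hbound z (by simpa using hz)).le) hf0 hb hfb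
    hderiv.hasDerivWithinAt
end

section
/- Let Q(z) = ∑_{j=0}^{n} c_j z^j be a complex polynomial of degree n ≥ 1 all of whose zeros lie in |z| ≤ 1. Then for every z with |z| = 1, |Q′(z)| ≥ (1/2)·(n + (|c_n| − |c_0|)/(|c_n| + |c_0|))·|Q(z)|. -/
open Polynomial Metric

/-!
At a point `z` with `Q z ≠ 0` the logarithmic derivative splits over the roots,
`2 z Q'(z) / Q(z) = n + ∑ (z + w) / (z - w)`. The real part of each summand is a Poisson kernel,
which Harnack's inequality bounds below by `(‖z‖ - ‖w‖) / (‖z‖ + ‖w‖)`. Such quotients behave like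
hyperbolic tangents, and subadditivity of `tanh` on `[0, ∞)` bounds their sum below by the quotient
formed from `‖z‖ ^ n` and `∏ ‖w‖`, where `∏ ‖w‖ = ‖c₀‖ / ‖cₙ‖` by Vieta.
-/

section OrderedField

variable {K : Type*} [Field K] [LinearOrder K] [IsStrictOrderedRing K]

-- With `tanh x = (a - b) / (a + b)` and `tanh y = (c - d) / (c + d)`, this is the subadditivity of
-- `tanh` on `[0, ∞)`.
theorem mul_sub_mul_div_mul_add_mul_le {a b c d : K} (ha : 0 < a) (hb : 0 ≤ b) (hba : b ≤ a)
    (hc : 0 < c) (hd : 0 ≤ d) (hdc : d ≤ c) :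
    (a * c - b * d) / (a * c + b * d) ≤ (a - b) / (a + b) + (c - d) / (c + d) := by
  have defect : (a - b) / (a + b) + (c - d) / (c + d) - (a * c - b * d) / (a * c + b * d)
      = (a - b) * (c - d) * (a * c - b * d) / ((a + b) * (c + d) * (a * c + b * d)) := by
    field_simp
    ring
  have hab : 0 ≤ a - b := sub_nonneg.2 hba
  have hcd : 0 ≤ c - d := sub_nonneg.2 hdc
  have habcd : 0 ≤ a * c - b * d := sub_nonneg.2 (mul_le_mul hba hdc hd ha.le)
  rw [← sub_nonneg, defect]
  exact div_nonneg (mul_nonneg (mul_nonneg hab hcd) habcd) (by positivity)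

theorem pow_card_sub_prod_div_le_sum {r : K} (hr : 0 < r) (s : Multiset K)
    (hs : ∀ a ∈ s, 0 ≤ a ∧ a ≤ r) :
    (r ^ s.card - s.prod) / (r ^ s.card + s.prod) ≤ (s.map fun a ↦ (r - a) / (r + a)).sum := by
  induction s using Multiset.induction_on with
  | empty => simp
  | cons a s ih =>
    rw [Multiset.forall_mem_cons] at hs
    obtain ⟨⟨ha, har⟩, hs⟩ := hs
    have prod_nonneg : 0 ≤ s.prod := Multiset.prod_nonneg fun b hb ↦ (hs b hb).1
    have prod_le : s.prod ≤ r ^ s.card := by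
      simpa using Multiset.prod_map_le_prod_map₀ id (fun _ ↦ r)
        (fun b hb ↦ (hs b hb).1) fun b hb ↦ (hs b hb).2
    rw [Multiset.card_cons, pow_succ', Multiset.prod_cons, Multiset.map_cons, Multiset.sum_cons]
    exact (mul_sub_mul_div_mul_add_mul_le hr ha har (pow_pos hr _) prod_nonneg prod_le).trans
      (by gcongr; exact ih hs)

end OrderedField

theorem norm_sub_norm_div_le_re_add_div_sub {z w : ℂ} (hwz : ‖w‖ ≤ ‖z‖) (hne : z ≠ w) :
    (‖z‖ - ‖w‖) / (‖z‖ + ‖w‖) ≤ ((z + w) / (z - w)).re := by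
  have hsub : 0 < ‖z - w‖ := norm_pos_iff.2 (sub_ne_zero.2 hne)
  have hadd : 0 < ‖z‖ + ‖w‖ := hsub.trans_le (norm_sub_le z w)
  calc (‖z‖ - ‖w‖) / (‖z‖ + ‖w‖)
      = (‖z‖ ^ 2 - ‖w‖ ^ 2) / (‖z‖ + ‖w‖) ^ 2 := by
        field_simp
        ring
    _ ≤ (‖z‖ ^ 2 - ‖w‖ ^ 2) / ‖z - w‖ ^ 2 := by
        have : 0 ≤ ‖z‖ ^ 2 - ‖w‖ ^ 2 := sub_nonneg.2 (by gcongr)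
        gcongr
        exact norm_sub_le z w
    _ = ((z + w) / (z - w)).re := by
        simpa [poissonKernel_def, herglotzRieszKernel_def] using
          congrFun (poissonKernel_eq_re_herglotzRieszKernel (c := 0) (w := w)) z

theorem two_mul_mul_eval_derivative_div_eval {K : Type*} [Field K] {Q : K[X]} (hQ : Q.Splits)
    {z : K} (hz : Q.eval z ≠ 0) :
    2 * (z * (Q.derivative.eval z / Q.eval z))
      = Q.natDegree + (Q.roots.map fun w ↦ (z + w) / (z - w)).sum := by
  have summand : ∀ w ∈ Q.roots, 2 * (z * (1 / (z - w))) = 1 + (z + w) / (z - w) := by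
    intro w hw
    have hzw : z - w ≠ 0 := sub_ne_zero.2 fun h ↦ hz (h ▸ isRoot_of_mem_roots hw)
    field_simp
    ring
  rw [hQ.eval_derivative_div_eval_of_ne_zero hz, ← Multiset.sum_map_mul_left,
    ← Multiset.sum_map_mul_left, Multiset.map_congr rfl summand, Multiset.sum_map_add,
    hQ.natDegree_eq_card_roots]
  simp

theorem norm_coeff_zero_eq_norm_leadingCoeff_mul_prod_norm_roots {K : Type*} [NormedField K]
    {Q : K[X]} (hQ : Q.Splits) :
    ‖Q.coeff 0‖ = ‖Q.leadingCoeff‖ * (Q.roots.map norm).prod := by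
  have norm_prod : ‖Q.roots.prod‖ = (Q.roots.map norm).prod := map_multiset_prod normHom Q.roots
  simp [hQ.coeff_zero_eq_leadingCoeff_mul_prod_roots, norm_prod]

theorem pow_card_sub_prod_div_le_re_sum {z : ℂ} (hz : z ≠ 0) (s : Multiset ℂ)
    (hs : ∀ w ∈ s, ‖w‖ ≤ ‖z‖ ∧ z ≠ w) :
    (‖z‖ ^ s.card - (s.map norm).prod) / (‖z‖ ^ s.card + (s.map norm).prod)
      ≤ (s.map fun w ↦ (z + w) / (z - w)).sum.re :=
  calc (‖z‖ ^ s.card - (s.map norm).prod) / (‖z‖ ^ s.card + (s.map norm).prod)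
      ≤ (s.map fun w ↦ (‖z‖ - ‖w‖) / (‖z‖ + ‖w‖)).sum := by
        simpa using pow_card_sub_prod_div_le_sum (norm_pos_iff.2 hz) (s.map norm)
          (Multiset.forall_mem_map_iff.2 fun w hw ↦ ⟨norm_nonneg w, (hs w hw).1⟩)
    _ ≤ (s.map fun w ↦ ((z + w) / (z - w)).re).sum :=
        Multiset.sum_map_le_sum_map _ _ fun w hw ↦
          norm_sub_norm_div_le_re_add_div_sub (hs w hw).1 (hs w hw).2
    _ = (s.map fun w ↦ (z + w) / (z - w)).sum.re :=
        Multiset.sum_hom' s Complex.reAddGroupHom fun w ↦ (z + w) / (z - w)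

theorem le_re_mul_eval_derivative_div_eval {Q : ℂ[X]} {z : ℂ} (hz : z ≠ 0)
    (hroots : ∀ w, Q.IsRoot w → ‖w‖ ≤ ‖z‖) (hQz : Q.eval z ≠ 0) :
    1 / 2 * (Q.natDegree + (‖Q.leadingCoeff‖ * ‖z‖ ^ Q.natDegree - ‖Q.coeff 0‖) /
        (‖Q.leadingCoeff‖ * ‖z‖ ^ Q.natDegree + ‖Q.coeff 0‖))
      ≤ (z * (Q.derivative.eval z / Q.eval z)).re := by
  have hsplits : Q.Splits := IsAlgClosed.splits Q
  have hlead : ‖Q.leadingCoeff‖ ≠ 0 := by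
    rw [norm_ne_zero_iff, leadingCoeff_ne_zero]
    rintro rfl
    exact hQz eval_zero
  have root_bound := pow_card_sub_prod_div_le_re_sum hz Q.roots fun w hw ↦
    have hw := isRoot_of_mem_roots hw
    ⟨hroots w hw, fun h ↦ hQz (h ▸ hw)⟩
  have re_identity := congrArg Complex.re (two_mul_mul_eval_derivative_div_eval hsplits hQz)
  simp only [two_mul, Complex.add_re, Complex.natCast_re] at re_identity
  rw [norm_coeff_zero_eq_norm_leadingCoeff_mul_prod_norm_roots hsplits, ← mul_sub, ← mul_add,
    mul_div_mul_left _ _ hlead]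
  rw [← hsplits.natDegree_eq_card_roots] at root_bound
  linarith

theorem stmt_18_general (Q : ℂ[X]) (z : ℂ) (hz : z ≠ 0)
    (hroots : ∀ w, Q.IsRoot w → ‖w‖ ≤ ‖z‖) :
    1 / 2 * (Q.natDegree + (‖Q.leadingCoeff‖ * ‖z‖ ^ Q.natDegree - ‖Q.coeff 0‖) /
        (‖Q.leadingCoeff‖ * ‖z‖ ^ Q.natDegree + ‖Q.coeff 0‖)) * ‖Q.eval z‖
      ≤ ‖z‖ * ‖Q.derivative.eval z‖ := by
  by_cases hQz : Q.eval z = 0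
  · simp only [hQz, norm_zero, mul_zero]
    positivity
  rw [← le_div_iff₀ (norm_pos_iff.2 hQz), mul_div_assoc, ← norm_div, ← norm_mul]
  exact (le_re_mul_eval_derivative_div_eval hz hroots hQz).trans (Complex.re_le_norm _)

theorem stmt_18 (n : ℕ) (hn : 1 ≤ n) (Q : Polynomial ℂ) (hdeg : Q.natDegree = n)
    (hroots : ∀ w : ℂ, Q.IsRoot w → ‖w‖ ≤ 1) :
    ∀ z : ℂ, ‖z‖ = 1 →
      ‖(Polynomial.derivative Q).eval z‖ ≥
        (1 / 2) *
          ((n : ℝ) + (‖Q.coeff n‖ - ‖Q.coeff 0‖) /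
              (‖Q.coeff n‖ + ‖Q.coeff 0‖)) *
          ‖Q.eval z‖ := by
  intro z hz
  have hz₀ : z ≠ 0 := norm_ne_zero_iff.1 (hz ▸ one_ne_zero)
  simpa [hz, hdeg, leadingCoeff] using stmt_18_general Q z hz₀ (hz ▸ hroots)
end

section
/- Let P(z) = ∑_{j=0}^{n} a_j z^j be a complex polynomial of degree n > 2 all of whose zeros lie in |z| ≤ k with k ≥ 1. Then max_{|z|=k}|P(z)| ≥ (2k^n/(k^n + 1))·max_{|z|=1}|P(z)| + (2k^{n−1}|a_{n−1}|/(k^n + 1))·((k^n − 1)/n − (k^{n−2} − 1)/(n−2)). -/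
open Polynomial Metric

/-!
Rescale to `p(z) = P(k z)`, whose zeros lie in the closed unit disc, and pass to the reciprocal
polynomial `H(z) = z ^ n * p(1 / z)`, whose zeros satisfy `1 ≤ |z|`. The claim becomes a bound for
the growth of `H` from the unit circle to the circle of radius `k`, obtained by integrating a bound
for `H'` along rays. On the unit circle `|H'| ≤ n / 2 * max |H|` (Erdős–Lax); outside it a
polynomial `Q` of degree at most `m` satisfies the inequality of Frappier, Rahman and Ruscheweyh
`|Q(z)| ≤ |z| ^ m * max |Q| - (|z| ^ m - |z| ^ (m - 2)) * |Q(0)|`, applied to `Q = H'`.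

For the latter, the reciprocal `f` of `Q` is evaluated at a unitary dilation `U` of the scalar
`ζ = 1 / z`: one entry of `f(U)` is `f(ζ) + e * (1 - |ζ| ^ 2) * a_m`, with `a_m` the coefficient of
`f` in degree `m` and `e` a unimodular number of our choice, and it is bounded by the norm of
`f(U)`, hence by `max |f|` on the unit circle.
-/

theorem norm_eval_le_maxMod_s19 (f : ℂ[X]) {z : ℂ} {r : ℝ} (hz : ‖z‖ ≤ r) :
    ‖f.eval z‖ ≤ maxMod f r := by
  have on_sphere (w : ℂ) (hw : w ∈ sphere 0 r) : ‖f.eval w‖ ≤ maxMod f r := by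
    have hbdd := (isCompact_sphere (0 : ℂ) r).bddAbove_image f.continuous.norm.continuousOn
    exact le_ciSup (by rwa [Set.image_eq_range] at hbdd) (⟨w, hw⟩ : sphere (0 : ℂ) r)
  rcases hz.eq_or_lt with hz | hz
  · exact on_sphere z (by simpa using hz)
  · refine Complex.norm_le_of_forall_mem_frontier_norm_le (isBounded_ball (x := 0) (r := r))
      f.differentiable.diffContOnCl (fun w hw ↦ on_sphere w (frontier_ball_subset_sphere hw)) ?_
    exact subset_closure (by simpa using hz)

theorem maxMod_le {f : ℂ[X]} {r C : ℝ} (hr : 0 ≤ r) (h : ∀ z, ‖z‖ = r → ‖f.eval z‖ ≤ C) :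
    maxMod f r ≤ C := by
  have : Nonempty (sphere (0 : ℂ) r) := (NormedSpace.sphere_nonempty.2 hr).to_subtype
  exact ciSup_le fun z ↦ h z (by simp)

theorem maxMod_comp_C_mul_X (f : ℂ[X]) {c : ℂ} (hc : c ≠ 0) {r : ℝ} (hr : 0 ≤ r) :
    maxMod (f.comp (C c * X)) r = maxMod f (‖c‖ * r) := by
  refine le_antisymm (maxMod_le hr fun z hz ↦ ?_) (maxMod_le (by positivity) fun z hz ↦ ?_)
  · rw [eval_comp]
    exact norm_eval_le_maxMod_s19 f (by simp [hz])
  · have hz' : ‖c⁻¹ * z‖ ≤ r := by simp [hz, hc]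
    have h := norm_eval_le_maxMod_s19 (f.comp (C c * X)) hz'
    rwa [eval_comp, eval_mul, eval_C, eval_X, mul_inv_cancel_left₀ hc] at h

theorem eval_reflect_eq_pow_mul_eval_inv {K : Type*} [Field K] {n : ℕ} {f : K[X]}
    (hf : f.natDegree ≤ n) {z : K} (hz : z ≠ 0) :
    (f.reflect n).eval z = z ^ n * f.eval z⁻¹ := by
  let _ := invertibleOfNonzero (inv_ne_zero hz)
  have h : (f.reflect n).eval (⅟z⁻¹) * z⁻¹ ^ n = f.eval z⁻¹ :=
    eval₂_reflect_mul_pow (RingHom.id K) z⁻¹ n f hf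
  rw [← h, invOf_eq_inv, inv_inv, mul_comm, mul_assoc, ← mul_pow, inv_mul_cancel₀ hz, one_pow,
    mul_one]

theorem maxMod_reflect {n : ℕ} {f : ℂ[X]} (hf : f.natDegree ≤ n) {r : ℝ} (hr : 0 < r) :
    maxMod (f.reflect n) r = r ^ n * maxMod f r⁻¹ := by
  have ne_zero {z : ℂ} {s : ℝ} (hs : 0 < s) (hz : ‖z‖ = s) : z ≠ 0 := norm_pos_iff.1 (hz ▸ hs)
  refine le_antisymm (maxMod_le hr.le fun z hz ↦ ?_) ?_
  · rw [eval_reflect_eq_pow_mul_eval_inv hf (ne_zero hr hz), norm_mul, norm_pow, hz]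
    gcongr
    exact norm_eval_le_maxMod_s19 f (by simp [hz])
  · rw [← le_div_iff₀' (by positivity)]
    refine maxMod_le (by positivity) fun z hz ↦ (le_div_iff₀' (by positivity)).2 ?_
    have hz0 := ne_zero (inv_pos.2 hr) hz
    have h := norm_eval_le_maxMod_s19 (f.reflect n) (z := z⁻¹) (r := r) (by simp [hz])
    rwa [eval_reflect_eq_pow_mul_eval_inv hf (inv_ne_zero hz0), inv_inv, norm_mul, norm_pow,
      norm_inv, hz, inv_inv] at h

theorem norm_le_norm_sub_of_two_mul_re_le {a : ℝ} (ha : 0 ≤ a) {w : ℂ} (hw : 2 * w.re ≤ a) :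
    ‖w‖ ≤ ‖a - w‖ := by
  rw [← sq_le_sq₀ (norm_nonneg w) (norm_nonneg _), ← Complex.normSq_eq_norm_sq,
    ← Complex.normSq_eq_norm_sq, Complex.normSq_sub]
  simp only [Complex.normSq_ofReal, Complex.re_ofReal_mul, Complex.conj_re]
  nlinarith

theorem re_div_sub_le_half {u z : ℂ} (h : ‖u‖ ≤ ‖z‖) : (u / (u - z)).re ≤ 1 / 2 := by
  rcases eq_or_ne u z with rfl | hne
  · simp
  have hpos : 0 < Complex.normSq (u - z) := Complex.normSq_pos.2 (sub_ne_zero.2 hne)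
  have hsq : Complex.normSq u ≤ Complex.normSq z := by
    simp only [Complex.normSq_eq_norm_sq]
    gcongr
  rw [Complex.div_re, ← add_div, div_le_iff₀ hpos]
  simp only [Complex.normSq_apply, Complex.sub_re, Complex.sub_im] at *
  linarith

theorem two_mul_re_mul_logDeriv_le {n : ℕ} {f : ℂ[X]} (hf : f.natDegree ≤ n) {u : ℂ}
    (hroots : ∀ z, f.IsRoot z → ‖u‖ ≤ ‖z‖) :
    2 * (u * (f.derivative.eval u / f.eval u)).re ≤ n := by
  by_cases hu : f.eval u = 0
  · simp [hu]
  have hsum : (u * (f.derivative.eval u / f.eval u)).re =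
      (f.roots.map fun z ↦ (u / (u - z)).re).sum := by
    rw [(IsAlgClosed.splits f).eval_derivative_div_eval_of_ne_zero hu,
      ← Multiset.sum_map_mul_left, ← Complex.coe_reAddGroupHom, map_multiset_sum]
    simp [Multiset.map_map, div_eq_mul_inv]
  have hle : (f.roots.map fun z ↦ (u / (u - z)).re).sum ≤ f.roots.card • (1 / 2 : ℝ) := by
    refine (Multiset.sum_le_card_nsmul _ _ fun x hx ↦ ?_).trans_eq (by rw [Multiset.card_map])
    obtain ⟨z, hz, rfl⟩ := Multiset.mem_map.1 hx
    exact re_div_sub_le_half (hroots z (isRoot_of_mem_roots hz))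
  have hcard : (f.roots.card : ℝ) ≤ n := mod_cast f.card_roots'.trans hf
  rw [hsum]
  rw [nsmul_eq_mul] at hle
  linarith

theorem norm_mul_derivative_le_norm_sub {n : ℕ} {f : ℂ[X]} (hf : f.natDegree ≤ n) {u : ℂ}
    (hroots : ∀ z, f.IsRoot z → ‖u‖ ≤ ‖z‖) :
    ‖u * f.derivative.eval u‖ ≤ ‖n * f.eval u - u * f.derivative.eval u‖ := by
  by_cases hu : f.eval u = 0
  · simp [hu]
  set t := u * (f.derivative.eval u / f.eval u) with ht
  have ht' : u * f.derivative.eval u = t * f.eval u := by rw [ht]; field_simp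
  have hnorm : ‖t‖ ≤ ‖(n : ℂ) - t‖ := by
    exact_mod_cast norm_le_norm_sub_of_two_mul_re_le n.cast_nonneg
      (two_mul_re_mul_logDeriv_le hf hroots)
  rw [ht', ← sub_mul, norm_mul t, norm_mul (_ - t)]
  gcongr

theorem norm_mul_derivative_le_abs_sub {n : ℕ} {f : ℂ[X]} (hf : f.natDegree ≤ n) (u : ℂ) {μ : ℝ}
    (hμ : maxMod f ‖u‖ < μ) :
    ‖u * f.derivative.eval u‖ ≤ |n * μ - ‖n * f.eval u - u * f.derivative.eval u‖| := by
  -- The zero-free bound applies to `f - c μ`; this `c` aligns `n c μ` with the polar derivative.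
  obtain ⟨c, hc, hcA⟩ := Complex.exists_norm_mul_eq_self (n * f.eval u - u * f.derivative.eval u)
  set A := ‖n * f.eval u - u * f.derivative.eval u‖
  have hroots (z : ℂ) (hz : (f - C (c * μ)).IsRoot z) : ‖u‖ ≤ ‖z‖ := by
    by_contra! hzu
    have hfz : f.eval z = c * μ := by simpa [sub_eq_zero] using hz
    have h := norm_eval_le_maxMod_s19 f hzu.le
    rw [hfz, norm_mul, hc, one_mul, Complex.norm_real] at h
    exact absurd (le_abs_self μ) (by simpa using h.trans_lt hμ)
  have h := norm_mul_derivative_le_norm_sub (natDegree_sub_C.trans_le hf) hroots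
  have hA : n * (f.eval u - c * μ) - u * f.derivative.eval u = c * ((A - n * μ : ℝ) : ℂ) := by
    push_cast
    linear_combination -hcA
  simp only [derivative_sub, derivative_C, sub_zero, eval_sub, eval_C] at h
  rwa [hA, norm_mul c, hc, one_mul, Complex.norm_real, Real.norm_eq_abs, abs_sub_comm] at h

theorem norm_sub_add_norm_mul_derivative_le {n : ℕ} {f : ℂ[X]} (hf : f.natDegree ≤ n) (u : ℂ) :
    ‖n * f.eval u - u * f.derivative.eval u‖ + ‖u * f.derivative.eval u‖ ≤
      n * maxMod f ‖u‖ := by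
  have hdist {μ : ℝ} := norm_mul_derivative_le_abs_sub hf u (μ := μ)
  have hfu := norm_eval_le_maxMod_s19 f (le_refl ‖u‖)
  set A := ‖n * f.eval u - u * f.derivative.eval u‖ with hA
  rcases n.eq_zero_or_pos with rfl | hn
  · obtain ⟨a, rfl⟩ := natDegree_eq_zero.1 (Nat.le_zero.1 hf)
    simp [hA]
  have hn0 : (0 : ℝ) < n := mod_cast hn
  have hAle : A ≤ n * maxMod f ‖u‖ := by
    by_contra! hlt
    have h := hdist ((lt_div_iff₀' hn0).2 hlt)
    rw [mul_div_cancel₀ A hn0.ne', sub_self, abs_zero, norm_le_zero_iff] at h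
    rw [hA, h, sub_zero, norm_mul, Complex.norm_natCast] at hlt
    exact hlt.not_ge (by gcongr)
  have hgt (μ : ℝ) (hμ : maxMod f ‖u‖ < μ) : (A + ‖u * f.derivative.eval u‖) / n ≤ μ := by
    have h := hdist hμ
    rw [abs_of_nonneg (sub_nonneg.2 (hAle.trans (by gcongr)))] at h
    rw [div_le_iff₀' hn0]
    linarith
  exact (div_le_iff₀' hn0).1 (le_of_forall_gt_imp_ge_of_dense hgt)

theorem maxMod_derivative_le {n : ℕ} {f : ℂ[X]} (hf : f.natDegree ≤ n) {r : ℝ} (hr : 0 < r)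
    (hroots : ∀ z, f.IsRoot z → r ≤ ‖z‖) :
    maxMod f.derivative r ≤ n * maxMod f r / (2 * r) := by
  refine maxMod_le hr.le fun u hu ↦ ?_
  subst hu
  have hpolar := norm_mul_derivative_le_norm_sub hf hroots
  have hsum := norm_sub_add_norm_mul_derivative_le hf u
  rw [norm_mul] at hpolar hsum
  rw [le_div_iff₀ (by positivity)]
  linarith

theorem norm_aeval_le_maxMod {A : Type*} [CStarAlgebra A] {U : A} (hU : U ∈ unitary A)
    (f : ℂ[X]) : ‖aeval U f‖ ≤ maxMod f 1 := by
  have := isStarNormal_of_mem_unitary hU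
  rw [← cfc_polynomial f U]
  have h0 : 0 ≤ maxMod f 1 := (norm_nonneg _).trans (norm_eval_le_maxMod_s19 f (z := 0) (by simp))
  refine norm_cfc_le h0 fun z hz ↦ norm_eval_le_maxMod_s19 f ?_
  exact (mem_sphere_zero_iff_norm.1 (spectrum.subset_circle_of_unitary hU hz)).le

theorem norm_sq_add_norm_sq_rotation {ζ : ℂ} {s : ℝ} (h : ‖ζ‖ ^ 2 + s ^ 2 = 1) (a b : ℂ) :
    ‖ζ * a + s * b‖ ^ 2 + ‖s * a - star ζ * b‖ ^ 2 = ‖a‖ ^ 2 + ‖b‖ ^ 2 := by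
  simp only [← Complex.normSq_eq_norm_sq, Complex.normSq_apply] at *
  simp only [Complex.add_re, Complex.add_im, Complex.sub_re, Complex.sub_im, Complex.mul_re,
    Complex.mul_im, Complex.ofReal_re, Complex.ofReal_im, RCLike.star_def, Complex.conj_re,
    Complex.conj_im]
  linear_combination (a.re ^ 2 + a.im ^ 2 + b.re ^ 2 + b.im ^ 2) * h

theorem sq_sqrt_one_sub_norm_sq {ζ : ℂ} (hζ : ‖ζ‖ ≤ 1) : √(1 - ‖ζ‖ ^ 2) ^ 2 = 1 - ‖ζ‖ ^ 2 :=
  Real.sq_sqrt (sub_nonneg.2 (pow_le_one₀ (norm_nonneg ζ) hζ))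

/-- A unitary `(p + 1)`-dilation of the scalar `ζ` of the closed unit disc, for a unimodular free
parameter `e`: with `s = √(1 - ‖ζ‖ ^ 2)` it maps `e₀ ↦ ζ e₀ + s e₁` and the last basis vector to
`e (s e₀ - conj ζ e₁)`, and shifts `eᵢ ↦ eᵢ₊₁` otherwise. The `(0, 0)` entry of its `j`-th power is
`ζ ^ j` for `j ≤ p + 1`, and `e` first shows up in the power `p + 2`. -/
noncomputable def scalarDilation (p : ℕ) (ζ e : ℂ) :
    EuclideanSpace ℂ (Fin (p + 2)) →L[ℂ] EuclideanSpace ℂ (Fin (p + 2)) :=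
  LinearMap.toContinuousLinearMap {
    toFun x := WithLp.toLp 2 <|
      Fin.cons (ζ * x 0 + √(1 - ‖ζ‖ ^ 2) * (e * x (Fin.last _))) <|
      Fin.cons (√(1 - ‖ζ‖ ^ 2) * x 0 - star ζ * (e * x (Fin.last _))) fun i ↦ x i.succ.castSucc
    map_add' x y := by
      ext i
      refine Fin.cases ?_ (Fin.cases ?_ fun i ↦ ?_) i <;>
        simp only [PiLp.add_apply, Fin.castSucc_succ, Fin.cons_zero, Fin.cons_succ] <;> ring
    map_smul' c x := by
      ext i
      refine Fin.cases ?_ (Fin.cases ?_ fun i ↦ ?_) i <;>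
        simp only [PiLp.smul_apply, smul_eq_mul, RingHom.id_apply, Fin.castSucc_succ,
          Fin.cons_zero, Fin.cons_succ] <;> ring }

namespace scalarDilation

variable {p : ℕ} {ζ e : ℂ}

theorem apply_zero (x : EuclideanSpace ℂ (Fin (p + 2))) :
    scalarDilation p ζ e x 0 = ζ * x 0 + √(1 - ‖ζ‖ ^ 2) * (e * x (Fin.last _)) := rfl

theorem apply_one (x : EuclideanSpace ℂ (Fin (p + 2))) :
    scalarDilation p ζ e x 1 = √(1 - ‖ζ‖ ^ 2) * x 0 - star ζ * (e * x (Fin.last _)) := rfl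

theorem apply_succ_succ (x : EuclideanSpace ℂ (Fin (p + 2))) (i : Fin p) :
    scalarDilation p ζ e x i.succ.succ = x i.succ.castSucc := rfl

theorem norm_map (hζ : ‖ζ‖ ≤ 1) (he : ‖e‖ = 1) (x : EuclideanSpace ℂ (Fin (p + 2))) :
    ‖scalarDilation p ζ e x‖ = ‖x‖ := by
  rw [← sq_eq_sq₀ (norm_nonneg _) (norm_nonneg _), EuclideanSpace.norm_sq_eq,
    EuclideanSpace.norm_sq_eq, Fin.sum_univ_succ, Fin.sum_univ_succ,
    Fin.sum_univ_succ (fun i ↦ ‖x i‖ ^ 2), Fin.sum_univ_castSucc (fun i ↦ ‖x (Fin.succ i)‖ ^ 2)]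
  have h := norm_sq_add_norm_sq_rotation (s := √(1 - ‖ζ‖ ^ 2)) (ζ := ζ)
    (by rw [sq_sqrt_one_sub_norm_sq hζ]; ring) (x 0) (e * x (Fin.last _))
  rw [norm_mul e, he, one_mul, ← apply_zero, ← apply_one] at h
  simp only [Fin.succ_zero_eq_one, apply_succ_succ, Fin.succ_last, Fin.castSucc_succ] at *
  linarith

theorem mem_unitary (hζ : ‖ζ‖ ≤ 1) (he : ‖e‖ = 1) :
    scalarDilation p ζ e ∈ unitary (EuclideanSpace ℂ (Fin (p + 2)) →L[ℂ] _) := by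
  let T : EuclideanSpace ℂ (Fin (p + 2)) →ₗᵢ[ℂ] EuclideanSpace ℂ (Fin (p + 2)) :=
    ⟨scalarDilation p ζ e, norm_map hζ he⟩
  exact (Unitary.linearIsometryEquiv.symm (T.toLinearIsometryEquiv rfl)).2

theorem pow_apply_eq_zero_of_lt (i : ℕ) (j : Fin (p + 2)) (hij : i < j) :
    (scalarDilation p ζ e ^ i) (EuclideanSpace.single 0 1) j = 0 := by
  induction i generalizing j with
  | zero => simp [Fin.pos_iff_ne_zero.1 (show 0 < j from hij)]
  | succ i ih =>
    obtain ⟨k, rfl⟩ : ∃ k : Fin p, j = k.succ.succ :=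
      ⟨⟨j - 2, by omega⟩, Fin.ext (by simp only [Fin.val_succ]; omega)⟩
    rw [pow_succ', mul_apply_eq_comp, apply_succ_succ]
    exact ih _ (by simpa using hij)

theorem pow_apply_succ (j : Fin (p + 1)) :
    (scalarDilation p ζ e ^ (j + 1 : ℕ)) (EuclideanSpace.single 0 1) j.succ = √(1 - ‖ζ‖ ^ 2) := by
  induction j using Fin.induction with
  | zero => simp [apply_one]
  | succ j ih =>
    rw [pow_succ', mul_apply_eq_comp, apply_succ_succ]
    exact ih

theorem pow_apply_zero {j : ℕ} (hj : j ≤ p + 1) :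
    (scalarDilation p ζ e ^ j) (EuclideanSpace.single 0 1) 0 = ζ ^ j := by
  induction j with
  | zero => simp
  | succ j ih =>
    rw [pow_succ', mul_apply_eq_comp, apply_zero, ih (by omega),
      pow_apply_eq_zero_of_lt j _ (by simpa using hj), pow_succ']
    ring

theorem pow_add_two_apply_zero (hζ : ‖ζ‖ ≤ 1) :
    (scalarDilation p ζ e ^ (p + 2)) (EuclideanSpace.single 0 1) 0 =
      ζ ^ (p + 2) + e * (1 - ‖ζ‖ ^ 2 : ℝ) := by
  have hlast := pow_apply_succ (ζ := ζ) (e := e) (Fin.last p)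
  rw [Fin.val_last, Fin.succ_last] at hlast
  rw [pow_succ', mul_apply_eq_comp, apply_zero, pow_apply_zero le_rfl, hlast]
  have hs : ((√(1 - ‖ζ‖ ^ 2) : ℝ) : ℂ) ^ 2 = (1 - ‖ζ‖ ^ 2 : ℝ) :=
    mod_cast sq_sqrt_one_sub_norm_sq hζ
  linear_combination e * hs

theorem aeval_apply_zero (hζ : ‖ζ‖ ≤ 1) {f : ℂ[X]} (hf : f.natDegree ≤ p + 2) :
    aeval (scalarDilation p ζ e) f (EuclideanSpace.single 0 1) 0 =
      f.eval ζ + e * ((1 - ‖ζ‖ ^ 2 : ℝ) * f.coeff (p + 2)) := by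
  have hlt : f.natDegree < p + 2 + 1 := Nat.lt_succ_of_le hf
  have hlow : ∑ j ∈ Finset.range (p + 2), f.coeff j *
      (scalarDilation p ζ e ^ j) (EuclideanSpace.single 0 1) 0 =
      ∑ j ∈ Finset.range (p + 2), f.coeff j * ζ ^ j :=
    Finset.sum_congr rfl fun j hj ↦ by
      rw [pow_apply_zero (Nat.lt_succ_iff.1 (Finset.mem_range.1 hj))]
  rw [aeval_eq_sum_range' hlt, eval_eq_sum_range' hlt, Finset.sum_range_succ,
    Finset.sum_range_succ (fun j ↦ f.coeff j * ζ ^ j), ← hlow]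
  simp only [add_apply, sum_apply, smul_apply, PiLp.add_apply, PiLp.smul_apply,
    WithLp.ofLp_sum, Finset.sum_apply, smul_eq_mul, pow_add_two_apply_zero hζ]
  ring

end scalarDilation

theorem exists_norm_one_norm_add_mul (a b : ℂ) : ∃ e : ℂ, ‖e‖ = 1 ∧ ‖a + e * b‖ = ‖a‖ + ‖b‖ := by
  obtain ⟨c, hc, hca⟩ := Complex.exists_norm_mul_eq_self a
  obtain ⟨d, hd, hdb⟩ := Complex.exists_norm_eq_mul_self b
  refine ⟨c * d, by rw [norm_mul, hc, hd, one_mul], ?_⟩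
  have h : a + c * d * b = c * ((‖a‖ + ‖b‖ : ℝ) : ℂ) := by
    push_cast
    linear_combination -hca - c * hdb
  rw [h, norm_mul, hc, one_mul, Complex.norm_real, Real.norm_of_nonneg (by positivity)]

theorem norm_eval_add_norm_coeff_le_maxMod {m : ℕ} (hm : 2 ≤ m) {f : ℂ[X]}
    (hf : f.natDegree ≤ m) {ζ : ℂ} (hζ : ‖ζ‖ ≤ 1) :
    ‖f.eval ζ‖ + (1 - ‖ζ‖ ^ 2) * ‖f.coeff m‖ ≤ maxMod f 1 := by
  obtain ⟨p, rfl⟩ := Nat.exists_eq_add_of_le' hm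
  obtain ⟨e, he, hadd⟩ :=
    exists_norm_one_norm_add_mul (f.eval ζ) ((1 - ‖ζ‖ ^ 2 : ℝ) * f.coeff (p + 2))
  have hnonneg : 0 ≤ 1 - ‖ζ‖ ^ 2 := sub_nonneg.2 (pow_le_one₀ (norm_nonneg ζ) hζ)
  rw [norm_mul, Complex.norm_real, Real.norm_of_nonneg hnonneg] at hadd
  let v : EuclideanSpace ℂ (Fin (p + 2)) := EuclideanSpace.single 0 1
  let U := scalarDilation p ζ e
  calc ‖f.eval ζ‖ + (1 - ‖ζ‖ ^ 2) * ‖f.coeff (p + 2)‖ = ‖aeval U f v 0‖ := by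
        rw [scalarDilation.aeval_apply_zero hζ hf, hadd]
    _ ≤ ‖aeval U f v‖ := PiLp.norm_apply_le _ 0
    _ ≤ ‖aeval U f‖ := (aeval U f).unit_le_opNorm v (by simp [v])
    _ ≤ maxMod f 1 := norm_aeval_le_maxMod (scalarDilation.mem_unitary hζ he) f

theorem norm_eval_le_pow_mul_maxMod_sub {m : ℕ} (hm : 2 ≤ m) {f : ℂ[X]} (hf : f.natDegree ≤ m)
    {z : ℂ} (hz : 1 ≤ ‖z‖) :
    ‖f.eval z‖ ≤ ‖z‖ ^ m * maxMod f 1 - (‖z‖ ^ m - ‖z‖ ^ (m - 2)) * ‖f.coeff 0‖ := by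
  have hz0 : 0 < ‖z‖ := one_pos.trans_le hz
  have hreflect : (f.reflect m).natDegree ≤ m := natDegree_reflect_le.trans (max_le le_rfl hf)
  have h := norm_eval_add_norm_coeff_le_maxMod hm hreflect (ζ := z⁻¹)
    (by rw [norm_inv]; exact inv_le_one_of_one_le₀ hz)
  rw [eval_reflect_eq_pow_mul_eval_inv hf (inv_ne_zero (norm_pos_iff.1 hz0)), inv_inv,
    maxMod_reflect hf one_pos, coeff_reflect, revAt_le le_rfl, Nat.sub_self, norm_mul, norm_pow,
    norm_inv, inv_one, one_pow, one_mul] at h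
  calc ‖f.eval z‖ = ‖z‖ ^ m * (‖z‖⁻¹ ^ m * ‖f.eval z‖) := by
        rw [inv_pow, mul_inv_cancel_left₀ (by positivity)]
    _ ≤ ‖z‖ ^ m * (maxMod f 1 - (1 - ‖z‖⁻¹ ^ 2) * ‖f.coeff 0‖) := by
        gcongr
        linarith
    _ = ‖z‖ ^ m * maxMod f 1 - (‖z‖ ^ m - ‖z‖ ^ (m - 2)) * ‖f.coeff 0‖ := by
        rw [pow_sub₀ _ hz0.ne' hm]
        ring

theorem hasDerivAt_pow_sub_one_div {m : ℕ} (hm : m ≠ 0) (x : ℝ) :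
    HasDerivAt (fun x : ℝ ↦ (x ^ m - 1) / m) (x ^ (m - 1)) x := by
  refine (((hasDerivAt_pow m x).sub_const 1).div_const (m : ℝ)).congr_deriv ?_
  field_simp

theorem hasDerivAt_growth_bound {n : ℕ} (hn : 2 < n) (M c x : ℝ) :
    HasDerivAt (fun x : ℝ ↦ (x ^ n + 1) / 2 * M -
        c * ((x ^ n - 1) / n - (x ^ (n - 2) - 1) / ((n : ℝ) - 2)))
      (n * x ^ (n - 1) * (M / 2) - c * (x ^ (n - 1) - x ^ (n - 2 - 1))) x := by
  have hleft : HasDerivAt (fun x : ℝ ↦ (x ^ n + 1) / 2 * M) (n * x ^ (n - 1) * (M / 2)) x :=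
    ((((hasDerivAt_pow n x).add_const 1).div_const 2).mul_const M).congr_deriv (by ring)
  have hright := hasDerivAt_pow_sub_one_div (Nat.sub_ne_zero_of_lt hn) x
  rw [Nat.cast_sub hn.le, Nat.cast_two] at hright
  exact hleft.sub (((hasDerivAt_pow_sub_one_div (by omega) x).sub hright).const_mul c)

theorem hasDerivAt_eval_ofReal_mul (f : ℂ[X]) (u : ℂ) (x : ℝ) :
    HasDerivAt (fun x : ℝ ↦ f.eval (x * u)) (f.derivative.eval (x * u) * u) x := by
  have hline : HasDerivAt (fun x : ℝ ↦ (x : ℂ) * u) u x := by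
    simpa using (Complex.ofRealCLM.hasDerivAt (x := x)).mul_const u
  exact (f.hasDerivAt (x * u)).comp x hline

theorem norm_eval_derivative_le_of_one_le_norm_roots {n : ℕ} (hn : 2 < n) {f : ℂ[X]}
    (hf : f.natDegree ≤ n) (hroots : ∀ z, f.IsRoot z → 1 ≤ ‖z‖) {z : ℂ} (hz : 1 ≤ ‖z‖) :
    ‖f.derivative.eval z‖ ≤
      n * ‖z‖ ^ (n - 1) * (maxMod f 1 / 2) - ‖f.coeff 1‖ * (‖z‖ ^ (n - 1) - ‖z‖ ^ (n - 2 - 1)) := by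
  have hdeg : f.derivative.natDegree ≤ n - 1 := (natDegree_derivative_le f).trans (by omega)
  have hgrowth := norm_eval_le_pow_mul_maxMod_sub (by omega) hdeg hz
  have hlax := maxMod_derivative_le hf one_pos hroots
  rw [coeff_derivative, Nat.cast_zero, zero_add, zero_add, mul_one,
    Nat.sub_right_comm] at hgrowth
  have := mul_le_mul_of_nonneg_left hlax (by positivity : 0 ≤ ‖z‖ ^ (n - 1))
  linarith

theorem maxMod_le_of_one_le_norm_roots {n : ℕ} (hn : 2 < n) {f : ℂ[X]} (hf : f.natDegree ≤ n)
    (hroots : ∀ z, f.IsRoot z → 1 ≤ ‖z‖) {R : ℝ} (hR : 1 ≤ R) :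
    maxMod f R ≤ (R ^ n + 1) / 2 * maxMod f 1 -
      ‖f.coeff 1‖ * ((R ^ n - 1) / n - (R ^ (n - 2) - 1) / ((n : ℝ) - 2)) := by
  have hR0 : 0 < R := one_pos.trans_le hR
  refine maxMod_le hR0.le fun z hz ↦ ?_
  obtain ⟨u, hu, rfl⟩ : ∃ u : ℂ, ‖u‖ = 1 ∧ z = R * u :=
    ⟨(R : ℂ)⁻¹ * z, by simp [hz, abs_of_pos hR0, hR0.ne'],
      (mul_inv_cancel_left₀ (by exact_mod_cast hR0.ne') z).symm⟩
  have hnorm {x : ℝ} (hx : 0 ≤ x) : ‖x * u‖ = x := by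
    rw [norm_mul, hu, mul_one, Complex.norm_of_nonneg hx]
  refine image_norm_le_of_norm_deriv_right_le_deriv_boundary (a := 1) (b := R)
    (f := fun x : ℝ ↦ f.eval (x * u)) (by fun_prop)
    (fun x _ ↦ (hasDerivAt_eval_ofReal_mul f u x).hasDerivWithinAt) ?_
    (hasDerivAt_growth_bound hn (maxMod f 1) ‖f.coeff 1‖) (fun x hx ↦ ?_) ⟨hR, le_rfl⟩
  · simpa using norm_eval_le_maxMod_s19 f hu.le
  · have hux := hnorm (zero_le_one.trans hx.1)
    have h := norm_eval_derivative_le_of_one_le_norm_roots hn hf hroots (hux.symm ▸ hx.1)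
    rw [hux] at h
    rwa [norm_mul, hu, mul_one]

theorem inv_le_norm_of_isRoot_reverse {K : Type*} [NormedField K] {f : K[X]} (hf : f ≠ 0) {r : ℝ}
    (hroots : ∀ w, f.IsRoot w → ‖w‖ ≤ r) {z : K} (hz : f.reverse.IsRoot z) : r⁻¹ ≤ ‖z‖ := by
  have hz0 : z ≠ 0 := by
    rintro rfl
    rw [IsRoot, ← coeff_zero_eq_eval_zero, coeff_zero_reverse] at hz
    exact hf (leadingCoeff_eq_zero.1 hz)
  have hinv : f.IsRoot z⁻¹ := by
    rw [IsRoot, reverse, eval_reflect_eq_pow_mul_eval_inv le_rfl hz0] at hz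
    exact (mul_eq_zero.1 hz).resolve_left (pow_ne_zero _ hz0)
  have h := hroots _ hinv
  rw [norm_inv] at h
  exact inv_le_of_inv_le₀ (norm_pos_iff.2 hz0) h

theorem pow_mul_maxMod_inv_le_of_norm_roots_le_one {n : ℕ} (hn : 2 < n) {f : ℂ[X]}
    (hf : f.natDegree = n) (hroots : ∀ w, f.IsRoot w → ‖w‖ ≤ 1) {R : ℝ} (hR : 1 ≤ R) :
    R ^ n * maxMod f R⁻¹ ≤ (R ^ n + 1) / 2 * maxMod f 1 -
      ‖f.coeff (n - 1)‖ * ((R ^ n - 1) / n - (R ^ (n - 2) - 1) / ((n : ℝ) - 2)) := by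
  have hreflect (z : ℂ) (hz : (f.reflect n).IsRoot z) : 1 ≤ ‖z‖ := by
    rw [← inv_one]
    refine inv_le_norm_of_isRoot_reverse ?_ hroots (by rwa [reverse, hf])
    exact ne_zero_of_natDegree_gt (hf ▸ hn)
  have h := maxMod_le_of_one_le_norm_roots hn (natDegree_reflect_le.trans (max_le le_rfl hf.le))
    hreflect hR
  rwa [maxMod_reflect hf.le (one_pos.trans_le hR), maxMod_reflect hf.le one_pos, one_pow, one_mul,
    inv_one, coeff_reflect, revAt_le (by omega)] at h

theorem stmt_19 (n : ℕ) (hn : 2 < n) (P : Polynomial ℂ) (hdeg : P.natDegree = n)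
    (k : ℝ) (hk : 1 ≤ k) (hroots : ∀ w : ℂ, P.IsRoot w → ‖w‖ ≤ k) :
    maxMod P k ≥
      (2 * k ^ n / (k ^ n + 1)) * maxMod P 1 +
        (2 * k ^ (n - 1) * ‖P.coeff (n - 1)‖ / (k ^ n + 1)) *
          ((k ^ n - 1) / (n : ℝ) - (k ^ (n - 2) - 1) / ((n : ℝ) - 2)) := by
  have hk0 : 0 < k := one_pos.trans_le hk
  have hkC : (k : ℂ) ≠ 0 := mod_cast hk0.ne'
  have hknorm : ‖(k : ℂ)‖ = k := Complex.norm_of_nonneg hk0.le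
  set p := P.comp (C (k : ℂ) * X) with hp
  have hpdeg : p.natDegree = n := by rw [natDegree_comp, natDegree_C_mul_X _ hkC, mul_one, hdeg]
  have hproots (w : ℂ) (hw : p.IsRoot w) : ‖w‖ ≤ 1 := by
    have h := hroots (k * w) (by simpa [hp, eval_comp] using hw)
    rw [norm_mul, hknorm] at h
    exact (mul_le_iff_le_one_right hk0).1 h
  have h := pow_mul_maxMod_inv_le_of_norm_roots_le_one hn hpdeg hproots hk
  rw [maxMod_comp_C_mul_X P hkC (inv_nonneg.2 hk0.le), maxMod_comp_C_mul_X P hkC zero_le_one,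
    comp_C_mul_X_coeff, norm_mul, norm_pow, hknorm, mul_inv_cancel₀ hk0.ne', mul_one] at h
  have hpos : 0 < k ^ n + 1 := by positivity
  rw [ge_iff_le, ← mul_le_mul_iff_right₀ (half_pos hpos)]
  refine le_trans (le_of_eq ?_) (le_sub_iff_add_le.1 h)
  field_simp
end
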